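/- arXiv:1807.00233 — 2 statements merged into one kernel-verified Lean document; each statement's English description precedes it below -/
import Mathlib

section
/- For Lebesgue-almost every ω ∈ [0,1], there are infinitely many positive integers n such that ∑_{m=1}^{n} |S_m(ω)|² ≥ 2·n²; that is, the set of ω ∈ [0,1] for which {n ∈ ℕ : ∑_{m=1}^{n} |S_m(ω)|² ≥ 2n²} is infinite has full Lebesgue measure in [0,1]. -/
open MeasureTheory Real

/-- The quadratic Weyl sum `S_m(ω) = ∑_{j=1}^m exp(2πiω(j²-j))`. -/
noncomputable def S (ω : ℝ) (m : ℕ) : ℂ :=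
  ∑ j ∈ Finset.Icc 1 m,
    Complex.exp (2 * (Real.pi : ℂ) * Complex.I * (ω : ℂ) * ((j : ℂ) ^ 2 - (j : ℂ)))

/-!
If `ω` is within `ε / q²` of a reduced fraction `ξ` with odd denominator `q`, then summation by
parts against the slowly varying phase of `ξ - ω` compares a block of `Kq` consecutive terms of the
Weyl sum at `ω` with the same block at `ξ`. The latter consists of `K` complete Gauss sums and has
modulus `K√q`, so `‖S_m(ω)‖ + ‖S_{m+Kq}(ω)‖` is essentially at least `K√q` for each `m ≤ Kq`.
By Cauchy–Schwarz, `∑_{m ≤ n} ‖S_m(ω)‖² ≥ (K / 32) n²` for `n = 2Kq`, and `K` is arbitrary.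

Every irrational `ω` has infinitely many odd-denominator approximations within `6 / q²`, because an
even-denominator fraction has a Farey neighbour of odd denominator. For almost every `ω` the
scaling lemma of Cassels (`blimsup_cthickening_mul_ae_eq`) improves the constant `6` to any `ε > 0`.
-/

open Filter Finset Topology

section FiniteSums

lemma sum_Ico_sub_mul_succ {R : Type*} [Ring R] (T u : ℕ → R) {a b : ℕ} (hab : a ≤ b) :
    ∑ j ∈ Ico a b, (T (j + 1) - T j) * u (j + 1) =
      T b * u b - T a * u a - ∑ j ∈ Ico a b, T j * (u (j + 1) - u j) := by
  rw [← sum_Ico_sub (fun j ↦ T j * u j) hab, ← sum_sub_distrib]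
  exact sum_congr rfl fun j _ ↦ by noncomm_ring

lemma norm_sum_Ico_sub_mul_succ_le {R : Type*} [NormedRing R] (T u : ℕ → R) {κ : ℝ} {a b : ℕ}
    (hab : a ≤ b) (hu : ∀ j, ‖u j‖ ≤ 1) (hκ : ∀ j ∈ Ico a b, ‖u (j + 1) - u j‖ ≤ κ) :
    ‖∑ j ∈ Ico a b, (T (j + 1) - T j) * u (j + 1)‖ ≤
      ‖T a‖ + ‖T b‖ + κ * ∑ j ∈ Ico a b, ‖T j‖ := by
  have boundary_le (j : ℕ) : ‖T j * u j‖ ≤ ‖T j‖ :=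
    (norm_mul_le _ _).trans (mul_le_of_le_one_right (norm_nonneg _) (hu j))
  have variation_le : ‖∑ j ∈ Ico a b, T j * (u (j + 1) - u j)‖ ≤ κ * ∑ j ∈ Ico a b, ‖T j‖ := by
    rw [mul_sum]
    refine norm_sum_le_of_le _ fun j hj ↦ (norm_mul_le _ _).trans ?_
    rw [mul_comm κ]
    exact mul_le_mul_of_nonneg_left (hκ j hj) (norm_nonneg _)
  rw [sum_Ico_sub_mul_succ T u hab]
  calc ‖T b * u b - T a * u a - ∑ j ∈ Ico a b, T j * (u (j + 1) - u j)‖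
    _ ≤ ‖T b * u b‖ + ‖T a * u a‖ + ‖∑ j ∈ Ico a b, T j * (u (j + 1) - u j)‖ :=
        (norm_sub_le _ _).trans (by gcongr; exact norm_sub_le _ _)
    _ ≤ ‖T b‖ + ‖T a‖ + κ * ∑ j ∈ Ico a b, ‖T j‖ :=
        add_le_add (add_le_add (boundary_le b) (boundary_le a)) variation_le
    _ = _ := by ring

lemma sum_Icc_add_shift {M : Type*} [AddCommMonoid M] (f : ℕ → M) (H : ℕ) :
    ∑ m ∈ Icc 1 H, (f m + f (m + H)) = ∑ m ∈ Icc 1 (2 * H), f m := by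
  simp only [← Ico_add_one_right_eq_Icc]
  rw [sum_add_distrib, sum_Ico_add' f,
    ← sum_Ico_consecutive f (show 1 ≤ H + 1 by lia) (show H + 1 ≤ 2 * H + 1 by lia)]
  congr 3 <;> lia

end FiniteSums

section GaussSum

lemma sq_norm_sum_quadratic_addChar {R : Type*} [CommRing R] [Fintype R] {ψ : AddChar R ℂ}
    (hψ : ψ.IsPrimitive) {a : R} (ha : IsUnit (2 * a)) (b : R) :
    ‖∑ x, ψ (a * x ^ 2 + b * x)‖ ^ 2 = Fintype.card R := by
  classical
  have inner_sum (y : R) :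
      ∑ x, ψ (a * x ^ 2 + b * x) * starRingEnd ℂ (ψ (a * y ^ 2 + b * y)) =
        ∑ d, ψ (a * d ^ 2 + b * d) * ψ (y * (2 * a * d)) := by
    rw [← Equiv.sum_comp (Equiv.addRight y)]
    refine sum_congr rfl fun d _ ↦ ?_
    rw [← AddChar.map_neg_eq_conj, ← AddChar.map_add_eq_mul, ← AddChar.map_add_eq_mul,
      Equiv.coe_addRight]
    congr 1
    ring
  suffices ((‖∑ x, ψ (a * x ^ 2 + b * x)‖ ^ 2 : ℝ) : ℂ) = Fintype.card R by exact_mod_cast this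
  calc ((‖∑ x, ψ (a * x ^ 2 + b * x)‖ ^ 2 : ℝ) : ℂ)
    _ = ∑ y, ∑ x, ψ (a * x ^ 2 + b * x) * starRingEnd ℂ (ψ (a * y ^ 2 + b * y)) := by
        rw [Complex.ofReal_pow, ← Complex.mul_conj', map_sum, sum_mul_sum, sum_comm]
    _ = ∑ d, ψ (a * d ^ 2 + b * d) * ∑ y, ψ (y * (2 * a * d)) := by
        simp_rw [inner_sum, mul_sum]
        exact sum_comm
    _ = Fintype.card R := by
        simp [AddChar.sum_mulShift _ hψ, ha.mul_right_eq_zero]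

variable {M : Type*} [AddCommMonoid M] {q : ℕ} [NeZero q]

lemma sum_Ico_natCast_zmod (f : ZMod q → M) (m : ℕ) :
    ∑ j ∈ Ico m (m + q), f j = ∑ x, f x := by
  have cast_injOn : Set.InjOn (Nat.cast : ℕ → ZMod q) (Ico m (m + q) : Finset ℕ) :=
    fun i hi j hj hij ↦ Nat.mod_injOn_Ico m q (by simpa using hi) (by simpa using hj)
      ((ZMod.natCast_eq_natCast_iff' i j q).1 hij)
  have image_cast : (Ico m (m + q)).image (Nat.cast : ℕ → ZMod q) = univ :=
    eq_univ_of_card _ (by rw [card_image_of_injOn cast_injOn, Nat.card_Ico, ZMod.card]; lia)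
  rw [← image_cast, sum_image cast_injOn]

lemma sum_Ico_mul_natCast_zmod (f : ZMod q → M) (m K : ℕ) :
    ∑ j ∈ Ico m (m + K * q), f j = K • ∑ x, f x := by
  induction K with
  | zero => simp
  | succ K ih =>
    rw [← sum_Ico_consecutive _ (Nat.le_add_right m (K * q)) (by lia), ih, succ_nsmul,
      ← sum_Ico_natCast_zmod f (m + K * q)]
    congr 3
    ring

end GaussSum

section WeylSum

/-- The `j`-th term `exp(2πiω(j²-j))` of the Weyl sum `S`. -/
noncomputable def weylTerm (ω : ℝ) (j : ℕ) : ℂ :=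
  Complex.exp (2 * (Real.pi : ℂ) * Complex.I * (ω : ℂ) * ((j : ℂ) ^ 2 - (j : ℂ)))

lemma S_succ_sub (ω : ℝ) (m : ℕ) : S ω (m + 1) - S ω m = weylTerm ω (m + 1) := by
  rw [S, S, sum_Icc_succ_top (by lia), add_sub_cancel_left, weylTerm]

lemma norm_weylTerm (ω : ℝ) (j : ℕ) : ‖weylTerm ω j‖ = 1 := by
  rw [weylTerm, ← Complex.norm_exp_ofReal_mul_I (2 * π * ω * ((j : ℝ) ^ 2 - j))]
  push_cast
  ring_nf

lemma weylTerm_add (a b : ℝ) (j : ℕ) : weylTerm (a + b) j = weylTerm a j * weylTerm b j := by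
  simp only [weylTerm, ← Complex.exp_add]
  push_cast
  ring_nf

lemma weylTerm_succ (ω : ℝ) (j : ℕ) :
    weylTerm ω (j + 1) = weylTerm ω j * Complex.exp (Complex.I * (4 * π * ω * j : ℝ)) := by
  simp only [weylTerm, ← Complex.exp_add]
  push_cast
  ring_nf

lemma norm_weylTerm_succ_sub_le (ω : ℝ) (j : ℕ) :
    ‖weylTerm ω (j + 1) - weylTerm ω j‖ ≤ 4 * π * |ω| * j := by
  rw [weylTerm_succ, ← mul_sub_one, norm_mul, norm_weylTerm, one_mul]
  refine Real.norm_exp_I_mul_ofReal_sub_one_le.trans_eq ?_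
  simp [abs_of_pos pi_pos]

instance neZero_den (ξ : ℚ) : NeZero ξ.den := ⟨ξ.den_ne_zero⟩

lemma weylTerm_succ_ratCast (ξ : ℚ) (j : ℕ) :
    weylTerm ξ (j + 1) =
      ZMod.stdAddChar (ξ.num * (j : ZMod ξ.den) ^ 2 + ξ.num * j : ZMod ξ.den) := by
  have cast_eq : (ξ.num * (j : ZMod ξ.den) ^ 2 + ξ.num * j : ZMod ξ.den) =
      ((ξ.num * ((j : ℤ) ^ 2 + j) : ℤ) : ZMod ξ.den) := by
    push_cast
    ring
  rw [cast_eq, ZMod.stdAddChar_coe, weylTerm, Rat.cast_def ξ]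
  push_cast
  ring_nf

lemma norm_sum_Ico_weylTerm_ratCast {ξ : ℚ} (hξ : Odd ξ.den) (m K : ℕ) :
    ‖∑ j ∈ Ico m (m + K * ξ.den), weylTerm ξ (j + 1)‖ = K * √ξ.den := by
  have unit_two : IsUnit (2 : ZMod ξ.den) := by
    exact_mod_cast (ZMod.isUnit_iff_coprime 2 ξ.den).2 (Nat.coprime_two_left.2 hξ)
  have unit_num : IsUnit (ξ.num : ZMod ξ.den) :=
    (ZMod.coe_int_isUnit_iff_isCoprime _ _).2 (Rat.isCoprime_num_den ξ).symm
  have gauss := sq_norm_sum_quadratic_addChar (ZMod.isPrimitive_stdAddChar ξ.den)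
    (unit_two.mul unit_num) ξ.num
  rw [ZMod.card] at gauss
  simp only [weylTerm_succ_ratCast]
  rw [sum_Ico_mul_natCast_zmod
    (fun x : ZMod ξ.den ↦ ZMod.stdAddChar (ξ.num * x ^ 2 + ξ.num * x : ZMod ξ.den)),
    nsmul_eq_mul, norm_mul, Complex.norm_natCast, ← gauss, sqrt_sq (norm_nonneg _)]

lemma mul_sqrt_den_le_norm_S_add (ω : ℝ) {ξ : ℚ} (hξ : Odd ξ.den) (m K : ℕ) :
    K * √ξ.den ≤ ‖S ω m‖ + ‖S ω (m + K * ξ.den)‖ +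
      4 * π * |ω - ξ| * (m + K * ξ.den : ℕ) * ∑ j ∈ Ico m (m + K * ξ.den), ‖S ω j‖ := by
  have term_eq (j : ℕ) :
      (S ω (j + 1) - S ω j) * weylTerm (ξ - ω) (j + 1) = weylTerm ξ (j + 1) := by
    rw [S_succ_sub, ← weylTerm_add, add_sub_cancel]
  rw [← norm_sum_Ico_weylTerm_ratCast hξ m K, ← sum_congr rfl fun j _ ↦ term_eq j]
  refine norm_sum_Ico_sub_mul_succ_le _ _ (Nat.le_add_right _ _) (fun j ↦ (norm_weylTerm _ j).le)
    fun j hj ↦ (norm_weylTerm_succ_sub_le _ j).trans ?_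
  rw [abs_sub_comm]
  gcongr
  exact (mem_Ico.1 hj).2.le

lemma sq_mul_sqrt_den_le_sum_norm_S {ω : ℝ} {ξ : ℚ} (hξ : Odd ξ.den) {K : ℕ}
    (hω : 8 * π * (K * ξ.den : ℝ) ^ 2 * |ω - ξ| ≤ 1) :
    (K : ℝ) ^ 2 * ξ.den * √ξ.den ≤ 2 * ∑ m ∈ Icc 1 (2 * (K * ξ.den)), ‖S ω m‖ := by
  set H := K * ξ.den with hH
  have hHR : (H : ℝ) = K * ξ.den := by rw [hH, Nat.cast_mul]
  set X := ∑ m ∈ Icc 1 (2 * H), ‖S ω m‖ with hX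
  have X_nonneg : 0 ≤ X := sum_nonneg fun _ _ ↦ norm_nonneg _
  have pair_bound (m : ℕ) (hm : m ∈ Icc 1 H) :
      K * √ξ.den ≤ ‖S ω m‖ + ‖S ω (m + H)‖ + 4 * π * |ω - ξ| * (2 * H) * X := by
    obtain ⟨one_le_m, m_le⟩ := mem_Icc.1 hm
    refine (mul_sqrt_den_le_norm_S_add ω hξ m K).trans ?_
    have block_le : ∑ j ∈ Ico m (m + H), ‖S ω j‖ ≤ X :=
      sum_le_sum_of_subset_of_nonneg (fun j hj ↦ by simp only [mem_Ico, mem_Icc] at *; lia)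
        fun _ _ _ ↦ norm_nonneg _
    have end_le : ((m + H : ℕ) : ℝ) ≤ 2 * H := by exact_mod_cast (by lia : m + H ≤ 2 * H)
    gcongr
  calc (K : ℝ) ^ 2 * ξ.den * √ξ.den
    _ = ∑ _m ∈ Icc 1 H, K * √ξ.den := by
        rw [sum_const, Nat.card_Icc, Nat.add_sub_cancel, nsmul_eq_mul, hHR]
        ring
    _ ≤ ∑ m ∈ Icc 1 H, (‖S ω m‖ + ‖S ω (m + H)‖ + 4 * π * |ω - ξ| * (2 * H) * X) :=
        sum_le_sum pair_bound
    _ = X + 8 * π * (K * ξ.den : ℝ) ^ 2 * |ω - ξ| * X := by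
        rw [sum_add_distrib, sum_Icc_add_shift (fun m ↦ ‖S ω m‖), ← hX, ← hHR, sum_const,
          Nat.card_Icc, Nat.add_sub_cancel, nsmul_eq_mul]
        ring
    _ ≤ 2 * X := by linarith [mul_le_of_le_one_left X_nonneg hω]

lemma sq_le_sum_sq_norm_S {ω : ℝ} {ξ : ℚ} (hξ : Odd ξ.den) {K : ℕ} (hK : 0 < K)
    (hω : 8 * π * (K * ξ.den : ℝ) ^ 2 * |ω - ξ| ≤ 1) :
    (K / 32 : ℝ) * (2 * (K * ξ.den) : ℕ) ^ 2 ≤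
      ∑ m ∈ Icc 1 (2 * (K * ξ.den)), ‖S ω m‖ ^ 2 := by
  set n := 2 * (K * ξ.den) with hn
  have hnR : (n : ℝ) = 2 * (K * ξ.den) := by rw [hn]; push_cast; rfl
  have n_pos : (0 : ℝ) < n := by positivity
  have cauchy_schwarz : (∑ m ∈ Icc 1 n, ‖S ω m‖) ^ 2 ≤ n * ∑ m ∈ Icc 1 n, ‖S ω m‖ ^ 2 := by
    simpa using sq_sum_le_card_mul_sum_sq (s := Icc 1 n) (f := fun m ↦ ‖S ω m‖)
  refine le_of_mul_le_mul_left (le_trans ?_ cauchy_schwarz) n_pos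
  calc (n : ℝ) * (K / 32 * n ^ 2)
    _ = ((K : ℝ) ^ 2 * ξ.den * √ξ.den / 2) ^ 2 := by
        rw [hnR, div_pow, mul_pow _ √_, sq_sqrt (Nat.cast_nonneg _)]
        ring
    _ ≤ (∑ m ∈ Icc 1 n, ‖S ω m‖) ^ 2 := by
        gcongr
        linarith [sq_mul_sqrt_den_le_sum_norm_S hξ hω]

end WeylSum

section DiophantineApproximation

lemma exists_lt_den_abs_sub_lt {ω : ℝ} (hω : Irrational ω) (N : ℕ) :
    ∃ ξ : ℚ, N < ξ.den ∧ |ω - ξ| < 1 / (ξ.den : ℝ) ^ 2 := by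
  have small := (tendsto_const_div_atTop_nhds_zero_nat 1).eventually
    (hω.eventually_forall_le_dist_cast_rat_of_den_le N)
  obtain ⟨n, far, n_pos⟩ := (small.and (eventually_gt_atTop 0)).exists
  obtain ⟨ξ, dist_le, den_le⟩ := exists_rat_abs_sub_le_and_den_le ω n_pos
  have den_pos : (1 : ℝ) ≤ ξ.den := by exact_mod_cast ξ.den_pos
  have n_posR : (0 : ℝ) < n := by exact_mod_cast n_pos
  refine ⟨ξ, not_le.1 fun den_le_N ↦ (far ξ den_le_N).not_gt ?_, dist_le.trans_lt ?_⟩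
  · calc dist ω ξ
      _ ≤ 1 / ((n + 1) * ξ.den) := dist_le
      _ < 1 / n := one_div_lt_one_div_of_lt n_posR (by nlinarith)
  · have den_leR : (ξ.den : ℝ) ≤ n := by exact_mod_cast den_le
    exact one_div_lt_one_div_of_lt (by positivity) (by nlinarith)

lemma exists_rat_sub_eq_one_div_den_mul_den (ξ : ℚ) :
    ∃ η : ℚ, ξ.den ≤ η.den ∧ η.den ≤ 2 * ξ.den ∧ ξ.den.Coprime η.den ∧
      ξ - η = 1 / (ξ.den * η.den) := by
  obtain ⟨a, b, hab⟩ := Rat.isCoprime_num_den ξ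
  have den_pos : (0 : ℤ) < ξ.den := by exact_mod_cast ξ.den_pos
  obtain ⟨s, hs⟩ := Int.eq_ofNat_of_zero_le
    (add_nonneg (Int.emod_nonneg a den_pos.ne') den_pos.le)
  have le_s : ξ.den ≤ s := by have := Int.emod_nonneg a den_pos.ne'; lia
  have s_le : s ≤ 2 * ξ.den := by have := Int.emod_lt_of_pos a den_pos; lia
  obtain ⟨r, hr⟩ : ∃ r : ℤ, s * ξ.num - r * ξ.den = 1 :=
    ⟨(1 - a / ξ.den) * ξ.num - b, by
      linear_combination hab - ξ.num * hs + ξ.num * Int.emod_add_mul_ediv a ξ.den⟩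
  have s_pos : 0 < s := ξ.den_pos.trans_le le_s
  have coprime_r_s : IsCoprime r s := ⟨-ξ.den, ξ.num, by linear_combination hr⟩
  have den_eq : ((r / s : ℚ)).den = s := by
    exact_mod_cast Rat.den_div_eq_of_coprime (a := r) (b := s) (by exact_mod_cast s_pos)
      (Int.isCoprime_iff_gcd_eq_one.1 coprime_r_s)
  refine ⟨r / s, by rwa [den_eq], by rwa [den_eq], ?_, ?_⟩
  · rw [den_eq, ← Nat.isCoprime_iff_coprime]
    exact ⟨-r, ξ.num, by linear_combination hr⟩
  · have den_ne : (ξ.den : ℚ) ≠ 0 := by exact_mod_cast ξ.den_ne_zero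
    have s_ne : (s : ℚ) ≠ 0 := by exact_mod_cast s_pos.ne'
    have hrQ : (s : ℚ) * ξ.num - r * ξ.den = 1 := by exact_mod_cast hr
    rw [den_eq]
    nth_rewrite 1 [← Rat.num_div_den ξ]
    field_simp
    linear_combination hrQ

lemma exists_odd_den_abs_sub_le {ω : ℝ} {ξ : ℚ} (hξ : |ω - ξ| < 1 / (ξ.den : ℝ) ^ 2) :
    ∃ η : ℚ, ξ.den ≤ η.den ∧ Odd η.den ∧ |ω - η| ≤ 6 / (η.den : ℝ) ^ 2 := by
  rcases Nat.even_or_odd ξ.den with even_den | odd_den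
  · obtain ⟨η, le_den, den_le, coprime_den, sub_eq⟩ := exists_rat_sub_eq_one_div_den_mul_den ξ
    refine ⟨η, le_den, Nat.Coprime.odd_of_left (coprime_den.coprime_dvd_left even_den.two_dvd), ?_⟩
    have dist_eq : |(ξ : ℝ) - η| = 1 / (ξ.den * η.den) := by
      have cast_sub_eq := congrArg (Rat.cast : ℚ → ℝ) sub_eq
      push_cast at cast_sub_eq
      rw [cast_sub_eq, abs_of_nonneg (by positivity)]
    have half_le : (η.den : ℝ) / 2 ≤ ξ.den := by
      rw [div_le_iff₀' two_pos]
      exact_mod_cast den_le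
    calc |ω - η|
      _ ≤ |ω - ξ| + |(ξ : ℝ) - η| := abs_sub_le _ _ _
      _ ≤ 1 / (ξ.den : ℝ) ^ 2 + 1 / (ξ.den * η.den) := by rw [dist_eq]; gcongr
      _ ≤ 1 / ((η.den : ℝ) / 2) ^ 2 + 1 / ((η.den : ℝ) / 2 * η.den) := by gcongr
      _ = 6 / (η.den : ℝ) ^ 2 := by field_simp; norm_num
  · exact ⟨ξ, le_rfl, odd_den, hξ.le.trans (by gcongr; norm_num)⟩

lemma infinite_odd_den_abs_sub_le {ω : ℝ} (hω : Irrational ω) :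
    {q : ℕ | Odd q ∧ ∃ ξ : ℚ, ξ.den = q ∧ |ω - ξ| ≤ 6 / (q : ℝ) ^ 2}.Infinite := by
  refine Set.infinite_iff_exists_gt.2 fun N ↦ ?_
  obtain ⟨ξ, lt_den, hξ⟩ := exists_lt_den_abs_sub_lt hω N
  obtain ⟨η, den_le, odd_den, hη⟩ := exists_odd_den_abs_sub_le hξ
  exact ⟨η.den, ⟨odd_den, η, rfl, hη⟩, lt_den.trans_le den_le⟩

lemma ae_infinite_mem_cthickening_mul_iff {α : Type*} [PseudoMetricSpace α]
    [SecondCountableTopology α] [MeasurableSpace α] [BorelSpace α] (μ : Measure α)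
    [IsLocallyFiniteMeasure μ] [IsUnifLocDoublingMeasure μ] (p : ℕ → Prop) (s : ℕ → Set α)
    {M : ℝ} (hM : 0 < M) {r : ℕ → ℝ} (hr : Tendsto r atTop (𝓝 0)) :
    ∀ᵐ x ∂μ, {i | p i ∧ x ∈ Metric.cthickening (M * r i) (s i)}.Infinite ↔
      {i | p i ∧ x ∈ Metric.cthickening (r i) (s i)}.Infinite := by
  have blimsup_eq := blimsup_cthickening_mul_ae_eq μ p s hM r hr
  rw [← Nat.cofinite_eq_atTop, cofinite.blimsup_set_eq, cofinite.blimsup_set_eq] at blimsup_eq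
  exact blimsup_eq.mem_iff

lemma ae_infinite_odd_den_abs_sub_lt {ε : ℝ} (hε : 0 < ε) :
    ∀ᵐ ω : ℝ, {q : ℕ | Odd q ∧ ∃ ξ : ℚ, ξ.den = q ∧ |ω - ξ| < ε / (q : ℝ) ^ 2}.Infinite := by
  have radius_tendsto : Tendsto (fun q : ℕ ↦ 6 / (q : ℝ) ^ 2) atTop (𝓝 0) :=
    tendsto_const_nhds.div_atTop
      ((tendsto_pow_atTop two_ne_zero).comp tendsto_natCast_atTop_atTop)
  have irrational_ae : ∀ᵐ ω : ℝ, Irrational ω := (Set.countable_range _).ae_notMem _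
  filter_upwards [irrational_ae, ae_infinite_mem_cthickening_mul_iff volume Odd
    (fun q ↦ {x : ℝ | ∃ ξ : ℚ, ξ.den = q ∧ (ξ : ℝ) = x}) (M := ε / 12) (by positivity)
    radius_tendsto] with ω hω scaling
  refine (scaling.2 ((infinite_odd_den_abs_sub_le hω).mono ?_)).mono ?_
  · rintro q ⟨odd_q, ξ, hξ, dist_le⟩
    exact ⟨odd_q, Metric.mem_cthickening_of_dist_le _ (ξ : ℝ) _ _ ⟨ξ, hξ, rfl⟩ dist_le⟩
  · rintro q ⟨odd_q, mem_cthickening⟩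
    have q_pos : (0 : ℝ) < q := by exact_mod_cast odd_q.pos
    have radius_lt : ε / 12 * (6 / (q : ℝ) ^ 2) < ε / (q : ℝ) ^ 2 := by
      rw [← mul_div_assoc]
      gcongr
      linarith
    obtain ⟨_, ⟨ξ, hξ, rfl⟩, dist_lt⟩ := Metric.mem_thickening_iff.1
      (Metric.cthickening_subset_thickening' (by positivity) radius_lt _ mem_cthickening)
    exact ⟨odd_q, ξ, hξ, dist_lt⟩

end DiophantineApproximation

theorem stmt_9_general :
    ∀ᵐ ω : ℝ, ∀ C : ℝ,
      {n : ℕ | 1 ≤ n ∧ C * (n : ℝ) ^ 2 ≤ ∑ m ∈ Finset.Icc 1 n, ‖S ω m‖ ^ 2}.Infinite := by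
  have approximations := ae_all_iff.2 fun K : ℕ ↦
    ae_infinite_odd_den_abs_sub_lt (ε := 1 / (8 * π * ((K + 1 : ℕ) : ℝ) ^ 2)) (by positivity)
  filter_upwards [approximations] with ω hω C
  obtain ⟨k, hk⟩ := exists_nat_ge (32 * C)
  set K := k + 1 with hK
  have C_le : C ≤ K / 32 := by rw [hK]; push_cast; linarith
  refine ((hω k).image (f := fun q ↦ 2 * (K * q)) fun a _ b _ hab ↦ by simpa [hK] using hab).mono ?_
  rintro _ ⟨_, ⟨odd_den, ξ, rfl, hξ⟩, rfl⟩
  have close : 8 * π * (K * ξ.den : ℝ) ^ 2 * |ω - ξ| ≤ 1 := by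
    rw [lt_div_iff₀ (by positivity), lt_div_iff₀ (by positivity)] at hξ
    linarith
  have one_le : 1 ≤ 2 * (K * ξ.den) := Nat.succ_le_of_lt (by positivity)
  exact ⟨one_le, le_trans (by gcongr) (sq_le_sum_sq_norm_S odd_den k.succ_pos close)⟩

/-- For Lebesgue almost-every `ω ∈ [0,1]` there are infinitely many `n` with
`∑_{m=1}^{n} |S_m(ω)|² ≥ 2n²`. -/
theorem stmt_9 :
    ∀ᵐ ω ∂(volume.restrict (Set.Icc (0:ℝ) 1)),
      {n : ℕ | 1 ≤ n ∧
        2 * (n : ℝ) ^ 2 ≤ ∑ m ∈ Finset.Icc 1 n, ‖S ω m‖ ^ 2}.Infinite :=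
  ae_restrict_of_ae (stmt_9_general.mono fun _ h ↦ h 2)
end

section
/- There exists a constant C₁ > 0 such that liminf_{n→∞} (1/n)·∫₀¹ √(∑_{m=1}^{n−1} |S_m(ω)|²) dω ≥ C₁. -/
open MeasureTheory Real

/-!
At a fraction `r = a / q` in lowest terms with `4 ∤ q`, the difference `S_{m+q}(r) - S_m(r)` is a
complete quadratic Gauss sum of modulus at least `√q`. Hence the energy `∑_{m < n} |S_m(r)|²` is at
least about `n q / 4`, which is of order `n²` once `q` is comparable to `n`. Abel summation carries
this bound over to every `ω` with `|ω - r| = O(1 / n²)`. By Dirichlet's theorem each `ω` is within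
`1 / ((Q + 1) q)` of some `a / q` with `q ≤ Q = ⌊n / 2⌋`; the arcs with `q ≤ Q / 16` or `4 ∣ q`
cover at most `7 / 8` of the unit interval, so on a set of measure at least `1 / 8` the square root
of the energy is at least a constant times `n`.

A real `liminf` carries information only for a sequence that does not tend to infinity. Here
Parseval's identity `∫₀¹ |S_m|² = m` and the AM-GM inequality bound the sequence by `1`.
-/

open Finset
open scoped FourierTransform

lemma norm_sq_sum_addChar_quadratic {R : Type*} [CommRing R] [Fintype R] [DecidableEq R]
    {ψ : AddChar R ℂ} (hψ : ψ.IsPrimitive) (a b : R) :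
    ((‖∑ x, ψ (a * x ^ 2 + b * x)‖ ^ 2 : ℝ) : ℂ) =
      Fintype.card R * ∑ h with 2 * a * h = 0, ψ (a * h ^ 2 + b * h) := by
  calc ((‖∑ x, ψ (a * x ^ 2 + b * x)‖ ^ 2 : ℝ) : ℂ)
      = ∑ y, ∑ x, ψ (a * x ^ 2 + b * x) * ψ (-(a * y ^ 2 + b * y)) := by
        rw [← Complex.normSq_eq_norm_sq, ← Complex.mul_conj, map_sum, sum_mul_sum, sum_comm]
        simp only [AddChar.map_neg_eq_conj]
    _ = ∑ y, ∑ h, ψ (a * h ^ 2 + b * h) * ψ (y * (2 * a * h)) := by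
        refine sum_congr rfl fun y _ ↦ ?_
        rw [← Equiv.sum_comp (Equiv.addLeft y)]
        refine sum_congr rfl fun h _ ↦ ?_
        rw [← AddChar.map_add_eq_mul, ← AddChar.map_add_eq_mul, Equiv.coe_addLeft]
        ring_nf
    _ = ∑ h, ψ (a * h ^ 2 + b * h) * if 2 * a * h = 0 then (Fintype.card R : ℂ) else 0 := by
        rw [sum_comm]
        simp_rw [← mul_sum, AddChar.sum_mulShift _ hψ]
        push_cast
        rfl
    _ = Fintype.card R * ∑ h with 2 * a * h = 0, ψ (a * h ^ 2 + b * h) := by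
        simp_rw [mul_ite, mul_zero, ← sum_filter, ← sum_mul, mul_comm]

lemma card_le_norm_sq_sum_addChar_quadratic {R : Type*} [CommRing R] [Fintype R]
    {ψ : AddChar R ℂ} (hψ : ψ.IsPrimitive) {a b : R}
    (hab : ∀ h, 2 * a * h = 0 → a * h ^ 2 + b * h = 0) :
    (Fintype.card R : ℝ) ≤ ‖∑ x, ψ (a * x ^ 2 + b * x)‖ ^ 2 := by
  classical
  have norm_sq_eq : ‖∑ x, ψ (a * x ^ 2 + b * x)‖ ^ 2 =
      Fintype.card R * (#{h : R | 2 * a * h = 0} : ℝ) := by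
    have sum_eq_card : ∑ h with 2 * a * h = 0, ψ (a * h ^ 2 + b * h) =
        (#{h : R | 2 * a * h = 0} : ℂ) := by
      rw [card_eq_sum_ones, Nat.cast_sum]
      refine sum_congr rfl fun h hh ↦ ?_
      rw [hab h (mem_filter.1 hh).2, AddChar.map_zero_eq_one, Nat.cast_one]
    have := norm_sq_sum_addChar_quadratic hψ a b
    rw [sum_eq_card] at this
    exact_mod_cast this
  have one_le_card : 1 ≤ #{h : R | 2 * a * h = 0} := card_pos.2 ⟨0, by simp⟩
  rw [norm_sq_eq]
  exact le_mul_of_one_le_right (by positivity) (mod_cast one_le_card)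

lemma sq_add_self_eq_zero_of_two_mul_eq_zero {q : ℕ} (hq : ¬ 4 ∣ q) {h : ZMod q}
    (h_two : 2 * h = 0) : h ^ 2 + h = 0 := by
  have : NeZero q := ⟨by rintro rfl; exact hq (dvd_zero 4)⟩
  have dvd_two_mul_val : q ∣ 2 * h.val := by
    rw [← ZMod.natCast_eq_zero_iff]
    simpa using h_two
  suffices q ∣ h.val ^ 2 + h.val by
    rw [← ZMod.natCast_eq_zero_iff] at this
    simpa using this
  obtain ⟨k, hk⟩ := dvd_two_mul_val
  obtain rfl | rfl : k = 0 ∨ k = 1 := by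
    have := h.val_lt
    have : k < 2 := by nlinarith
    omega
  · simp [show h.val = 0 by omega]
  · -- Here `q = 2 * h.val` with `h.val` odd, so `h.val * (h.val + 1)` is a multiple of `q`.
    obtain ⟨l, hl⟩ : Odd h.val := Nat.odd_iff.2 (by omega)
    exact ⟨l + 1, by linear_combination h.val * hl + (l + 1) * hk⟩

lemma stdAddChar_intCast_eq_fourierChar {q : ℕ} [NeZero q] (k : ℤ) :
    ZMod.stdAddChar (k : ZMod q) = 𝐞 (k / q) := by
  rw [ZMod.stdAddChar_coe, fourierChar_apply]
  push_cast
  ring_nf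

lemma sum_range_natCast_add_zmod {M : Type*} [AddCommMonoid M] {q : ℕ} [NeZero q]
    (f : ZMod q → M) (m : ℕ) : ∑ j ∈ range q, f ((m + j : ℕ) : ZMod q) = ∑ x, f x := by
  rw [← Equiv.sum_comp (Equiv.addLeft (m : ZMod q))]
  refine sum_nbij' (fun j ↦ (j : ZMod q)) ZMod.val (by simp) (by simp [ZMod.val_lt])
    (fun j hj ↦ ZMod.val_cast_of_lt (mem_range.1 hj)) (by simp) (by simp)

lemma S_eq_sum_range (ω : ℝ) (m : ℕ) :
    S ω m = ∑ j ∈ range m, (𝐞 (ω * (j ^ 2 + j)) : ℂ) := by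
  rw [S, range_eq_Ico, ← Ico_add_one_right_eq_Icc, ← sum_Ico_add' _ 0 m 1]
  refine sum_congr rfl fun j _ ↦ ?_
  rw [fourierChar_apply]
  push_cast
  ring_nf

@[simp]
lemma S_zero (ω : ℝ) : S ω 0 = 0 := by
  simp [S]

lemma continuous_S (m : ℕ) : Continuous fun ω ↦ S ω m := by
  unfold S
  fun_prop

lemma S_div_add_sub (a : ℤ) (q : ℕ) [NeZero q] (m : ℕ) :
    S (a / q) (m + q) - S (a / q) m =
      ∑ x : ZMod q, ZMod.stdAddChar ((a : ZMod q) * x ^ 2 + (a : ZMod q) * x) := by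
  rw [S_eq_sum_range, S_eq_sum_range, sum_range_add, add_sub_cancel_left,
    ← sum_range_natCast_add_zmod _ m]
  refine sum_congr rfl fun j _ ↦ ?_
  have phase_eq : (a / q : ℝ) * ((m + j : ℕ) ^ 2 + (m + j : ℕ)) =
      ((a * (m + j : ℕ) ^ 2 + a * (m + j : ℕ) : ℤ) : ℝ) / q := by
    push_cast
    ring
  rw [phase_eq, ← stdAddChar_intCast_eq_fourierChar]
  push_cast
  rfl

lemma den_le_norm_sq_S_add_den_sub {r : ℚ} (hr : ¬ 4 ∣ r.den) (m : ℕ) :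
    (r.den : ℝ) ≤ ‖S r (m + r.den) - S r m‖ ^ 2 := by
  have : NeZero r.den := ⟨r.den_nz⟩
  have isUnit_num : IsUnit (r.num : ZMod r.den) :=
    (ZMod.coe_int_isUnit_iff_isCoprime _ _).2 r.isCoprime_num_den.symm
  have eq_zero_of_two_mul (h : ZMod r.den) (hh : 2 * (r.num : ZMod r.den) * h = 0) :
      (r.num : ZMod r.den) * h ^ 2 + (r.num : ZMod r.den) * h = 0 := by
    rw [mul_comm 2, mul_assoc, isUnit_num.mul_right_eq_zero] at hh
    rw [← mul_add, sq_add_self_eq_zero_of_two_mul_eq_zero hr hh, mul_zero]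
  simpa only [Rat.cast_def, S_div_add_sub, ZMod.card] using
    card_le_norm_sq_sum_addChar_quadratic (ZMod.isPrimitive_stdAddChar r.den) eq_zero_of_two_mul

/-- The energy `∑_{m < n} |S_m(ω)|²` of the first `n` Weyl sums. The term `m = 0` vanishes, so
this is the radicand in the theorem, freed from the truncated subtraction `n - 1`. -/
noncomputable def weylEnergy (n : ℕ) (ω : ℝ) : ℝ :=
  ∑ m ∈ range n, ‖S ω m‖ ^ 2

lemma weylEnergy_eq_sum_Icc (n : ℕ) (ω : ℝ) :
    weylEnergy n ω = ∑ m ∈ Icc 1 (n - 1), ‖S ω m‖ ^ 2 := by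
  refine (sum_subset (fun m hm ↦ ?_) fun m hm hm' ↦ ?_).symm
  · simp only [mem_Icc, mem_range] at hm ⊢
    omega
  · obtain rfl : m = 0 := by
      simp only [mem_Icc, mem_range] at hm hm'
      omega
    simp

lemma weylEnergy_nonneg (n : ℕ) (ω : ℝ) : 0 ≤ weylEnergy n ω :=
  sum_nonneg fun _ _ ↦ by positivity

lemma continuous_weylEnergy (n : ℕ) : Continuous (weylEnergy n) :=
  continuous_finsetSum _ fun m _ ↦ (continuous_S m).norm.pow 2

lemma sub_den_mul_den_le_weylEnergy {r : ℚ} (hr : ¬ 4 ∣ r.den) {n : ℕ} (hn : r.den ≤ n) :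
    ((n : ℝ) - r.den) * r.den ≤ 4 * weylEnergy n r := by
  obtain ⟨k, rfl⟩ := Nat.exists_eq_add_of_le hn
  have head_le : ∑ m ∈ range k, ‖S r m‖ ^ 2 ≤ weylEnergy (r.den + k) r :=
    sum_le_sum_of_subset_of_nonneg (range_mono (Nat.le_add_left _ _)) fun _ _ _ ↦ by positivity
  have tail_le : ∑ m ∈ range k, ‖S r (m + r.den)‖ ^ 2 ≤ weylEnergy (r.den + k) r := by
    simp_rw [weylEnergy, sum_range_add, add_comm _ r.den]
    exact le_add_of_nonneg_left (sum_nonneg fun _ _ ↦ by positivity)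
  calc (((r.den + k : ℕ) : ℝ) - r.den) * r.den = ∑ _m ∈ range k, (r.den : ℝ) := by
        simp
    _ ≤ ∑ m ∈ range k, 2 * (‖S r (m + r.den)‖ ^ 2 + ‖S r m‖ ^ 2) := by
        refine sum_le_sum fun m _ ↦ (den_le_norm_sq_S_add_den_sub hr m).trans ?_
        exact (pow_le_pow_left₀ (norm_nonneg _) (norm_sub_le _ _) 2).trans add_sq_le
    _ ≤ 4 * weylEnergy (r.den + k) r := by
        rw [← mul_sum, sum_add_distrib]
        linarith

lemma norm_fourierChar_sub_fourierChar_le (x y : ℝ) :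
    ‖(𝐞 x : ℂ) - 𝐞 y‖ ≤ 2 * π * |x - y| := by
  have factor : (𝐞 x : ℂ) - 𝐞 y = 𝐞 y * (Complex.exp (Complex.I * (2 * π * (x - y) : ℝ)) - 1) := by
    rw [mul_comm Complex.I, ← fourierChar_apply, mul_sub, ← Circle.coe_mul,
      ← AddChar.map_add_eq_mul, add_sub_cancel, mul_one]
  rw [factor, norm_mul, Circle.norm_coe, one_mul]
  refine norm_exp_I_mul_ofReal_sub_one_le.trans_eq ?_
  rw [Real.norm_eq_abs, abs_mul, abs_of_pos two_pi_pos]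

lemma norm_sum_range_smul_sub_smul_sum_le {𝕜 E : Type*} [NormedField 𝕜]
    [SeminormedAddCommGroup E] [NormedSpace 𝕜 E] (u : ℕ → 𝕜) (a : ℕ → E) {D : ℝ} {m : ℕ}
    (hu : ∀ k < m, ‖u (k + 1) - u k‖ ≤ D) :
    ‖∑ j ∈ range m, u j • a j - u m • ∑ j ∈ range m, a j‖ ≤
      D * ∑ k ∈ range (m + 1), ‖∑ j ∈ range k, a j‖ := by
  induction m with
  | zero => simp
  | succ m ih =>
    have step : ∑ j ∈ range (m + 1), u j • a j - u (m + 1) • ∑ j ∈ range (m + 1), a j =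
        (∑ j ∈ range m, u j • a j - u m • ∑ j ∈ range m, a j) -
          (u (m + 1) - u m) • ∑ j ∈ range (m + 1), a j := by
      simp only [sum_range_succ]
      module
    rw [step, sum_range_succ _ (m + 1), mul_add]
    refine (norm_sub_le _ _).trans (add_le_add (ih fun k hk ↦ hu k (by omega)) ?_)
    rw [norm_smul]
    gcongr
    exact hu m (by omega)

lemma norm_S_le_norm_S_add (r ω : ℝ) (m : ℕ) :
    ‖S r m‖ ≤ ‖S ω m‖ + 4 * π * |r - ω| * m * ∑ k ∈ range (m + 1), ‖S ω k‖ := by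
  let u (j : ℕ) : ℂ := 𝐞 ((r - ω) * (j ^ 2 + j))
  have S_eq : S r m = ∑ j ∈ range m, u j • (𝐞 (ω * (j ^ 2 + j)) : ℂ) := by
    rw [S_eq_sum_range]
    refine sum_congr rfl fun j _ ↦ ?_
    rw [smul_eq_mul, ← Circle.coe_mul, ← AddChar.map_add_eq_mul, ← add_mul, sub_add_cancel]
  have norm_u_step_le (k : ℕ) (hk : k < m) : ‖u (k + 1) - u k‖ ≤ 4 * π * |r - ω| * m := by
    have hkm : (k : ℝ) + 1 ≤ m := mod_cast hk
    refine (norm_fourierChar_sub_fourierChar_le _ _).trans ?_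
    calc 2 * π * |(r - ω) * ((k + 1 : ℕ) ^ 2 + (k + 1 : ℕ)) - (r - ω) * (k ^ 2 + k)|
        = 2 * π * |(r - ω) * (2 * (k + 1))| := by
          push_cast
          ring_nf
      _ = 4 * π * |r - ω| * (k + 1) := by
          rw [abs_mul, abs_of_nonneg (by positivity : (0 : ℝ) ≤ 2 * (k + 1))]
          ring
      _ ≤ 4 * π * |r - ω| * m := by gcongr
  have abel := norm_sum_range_smul_sub_smul_sum_le u (fun j ↦ (𝐞 (ω * (j ^ 2 + j)) : ℂ))
    norm_u_step_le
  simp only [← S_eq, ← S_eq_sum_range] at abel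
  calc ‖S r m‖ ≤ ‖u m • S ω m‖ + ‖S r m - u m • S ω m‖ := norm_le_norm_add_norm_sub' _ _
    _ ≤ ‖S ω m‖ + 4 * π * |r - ω| * m * ∑ k ∈ range (m + 1), ‖S ω k‖ := by
        rw [norm_smul, Circle.norm_coe, one_mul]
        gcongr

lemma weylEnergy_le_mul_weylEnergy (n : ℕ) (r ω : ℝ) :
    weylEnergy n r ≤ 2 * (1 + (4 * π * |r - ω| * n ^ 2) ^ 2) * weylEnergy n ω := by
  set D := 4 * π * |r - ω| * n
  set T := ∑ k ∈ range n, ‖S ω k‖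
  have T_sq_le : T ^ 2 ≤ n * weylEnergy n ω := by
    simpa only [card_range] using! sq_sum_le_card_mul_sum_sq (s := range n) (f := (‖S ω ·‖))
  have norm_sq_le (m : ℕ) (hm : m ∈ range n) : ‖S r m‖ ^ 2 ≤ 2 * (‖S ω m‖ ^ 2 + (D * T) ^ 2) := by
    rw [mem_range] at hm
    have norm_le : ‖S r m‖ ≤ ‖S ω m‖ + D * T := by
      refine (norm_S_le_norm_S_add r ω m).trans ?_
      have hmn : (m : ℝ) ≤ n := mod_cast hm.le
      gcongr ‖S ω m‖ + ?_ * ?_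
      · exact mul_le_mul_of_nonneg_left hmn (by positivity)
      · exact sum_le_sum_of_subset_of_nonneg (range_mono hm) fun _ _ _ ↦ norm_nonneg _
    exact (pow_le_pow_left₀ (norm_nonneg _) norm_le 2).trans add_sq_le
  calc weylEnergy n r ≤ ∑ m ∈ range n, 2 * (‖S ω m‖ ^ 2 + (D * T) ^ 2) := sum_le_sum norm_sq_le
    _ = 2 * (weylEnergy n ω + n * (D ^ 2 * T ^ 2)) := by
        rw [← mul_sum, sum_add_distrib, sum_const, card_range, nsmul_eq_mul, mul_pow, weylEnergy]
    _ ≤ 2 * (weylEnergy n ω + n * (D ^ 2 * (n * weylEnergy n ω))) := by gcongr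
    _ = 2 * (1 + (4 * π * |r - ω| * n ^ 2) ^ 2) * weylEnergy n ω := by ring


/-- The points within `δ q` of some fraction whose denominator in lowest terms is some `q ∈ B`: the
union of the arcs around such fractions, for controlling the measure of the `ω` with an unsuitable
Dirichlet approximation. -/
def rationalNeighborhood (B : Finset ℕ) (δ : ℕ → ℝ) : Set ℝ :=
  {ω | ∃ r : ℚ, r.den ∈ B ∧ |ω - r| ≤ δ r.den}

lemma num_mem_Icc_of_abs_sub_lt {ω : ℝ} (hω : ω ∈ Set.Icc 0 1) {r : ℚ}
    (hr : |ω - r| < 1 / r.den) : r.num ∈ Set.Icc 0 (r.den : ℤ) := by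
  have den_pos : (0 : ℝ) < r.den := mod_cast r.den_pos
  have num_eq : (r.num : ℝ) = r * r.den := mod_cast (Rat.mul_den_eq_num r).symm
  have dist_num : |ω * r.den - r.num| < 1 := by
    rwa [num_eq, ← sub_mul, abs_mul, abs_of_pos den_pos, ← lt_div_iff₀ den_pos]
  rw [abs_lt] at dist_num
  have lower : (-1 : ℝ) < r.num := by nlinarith [hω.1]
  have upper : (r.num : ℝ) < r.den + 1 := by nlinarith [hω.2]
  exact ⟨Int.add_one_le_of_lt (mod_cast lower), Int.lt_add_one_iff.1 (mod_cast upper)⟩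

lemma Icc_inter_rationalNeighborhood_subset {B : Finset ℕ} {δ : ℕ → ℝ}
    (hδ : ∀ q ∈ B, δ q < 1 / q) :
    Set.Icc 0 1 ∩ rationalNeighborhood B δ ⊆
      ⋃ q ∈ B, ⋃ a ∈ range (q + 1), Metric.closedBall ((a : ℝ) / q) (δ q) := by
  rintro ω ⟨hω, r, hrB, hr⟩
  obtain ⟨num_nonneg, num_le⟩ := num_mem_Icc_of_abs_sub_lt hω (hr.trans_lt (hδ _ hrB))
  lift r.num to ℕ using num_nonneg with a ha
  simp only [Set.mem_iUnion]
  refine ⟨r.den, hrB, a, mem_range.2 (by omega), ?_⟩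
  rwa [Metric.mem_closedBall, Real.dist_eq, ← Int.cast_natCast a, ha, ← Rat.cast_def]

lemma volume_real_Icc_inter_rationalNeighborhood_le {B : Finset ℕ} {δ : ℕ → ℝ}
    (hδ₀ : ∀ q ∈ B, 0 ≤ δ q) (hδ : ∀ q ∈ B, δ q < 1 / q) :
    volume.real (Set.Icc 0 1 ∩ rationalNeighborhood B δ) ≤ ∑ q ∈ B, (q + 1) * (2 * δ q) := by
  calc volume.real (Set.Icc 0 1 ∩ rationalNeighborhood B δ)
      ≤ volume.real (⋃ q ∈ B, ⋃ a ∈ range (q + 1), Metric.closedBall ((a : ℝ) / q) (δ q)) :=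
        measureReal_mono (Icc_inter_rationalNeighborhood_subset hδ)
          (measure_biUnion_lt_top B.finite_toSet fun q _ ↦ measure_biUnion_lt_top
            (range (q + 1)).finite_toSet fun _ _ ↦ measure_closedBall_lt_top).ne
    _ ≤ ∑ q ∈ B, ∑ a ∈ range (q + 1), volume.real (Metric.closedBall ((a : ℝ) / q) (δ q)) :=
        (measureReal_biUnion_finset_le _ _).trans
          (sum_le_sum fun q _ ↦ measureReal_biUnion_finset_le _ _)
    _ = ∑ q ∈ B, (q + 1) * (2 * δ q) := by
        refine sum_congr rfl fun q hq ↦ ?_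
        simp [Real.volume_real_closedBall (hδ₀ q hq)]

lemma sum_dirichlet_arcs_le {B : Finset ℕ} {k : ℕ} (hk : 0 < k) (hB : ∀ q ∈ B, k ≤ q) (Q : ℕ) :
    ∑ q ∈ B, ((q : ℝ) + 1) * (2 * (1 / ((Q + 1) * q))) ≤ 2 * (1 + 1 / k) * #B / (Q + 1) := by
  calc ∑ q ∈ B, ((q : ℝ) + 1) * (2 * (1 / ((Q + 1) * q)))
      ≤ ∑ _q ∈ B, 2 * (1 + 1 / (k : ℝ)) / (Q + 1) := by
        refine sum_le_sum fun q hq ↦ ?_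
        have hkq : (k : ℝ) ≤ q := mod_cast hB q hq
        have q_pos : (0 : ℝ) < q := mod_cast hk.trans_le (hB q hq)
        calc ((q : ℝ) + 1) * (2 * (1 / ((Q + 1) * q))) = 2 * (1 + 1 / (q : ℝ)) / (Q + 1) := by
              field_simp
          _ ≤ 2 * (1 + 1 / (k : ℝ)) / (Q + 1) := by gcongr
    _ = 2 * (1 + 1 / k) * #B / (Q + 1) := by
        rw [sum_const, nsmul_eq_mul]
        ring

/-- The denominators `q ≤ Q` that are useless in Dirichlet's theorem: either so small that the
radius `1 / ((Q + 1) q)` is not of order `1 / Q²`, or divisible by `4`, in which case the Gauss sum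
of `x² + x` may vanish (it does for `q = 4`). -/
def badDenominators (Q : ℕ) : Finset ℕ :=
  {q ∈ Icc 1 Q | 16 * q ≤ Q ∨ 4 ∣ q}

lemma sum_badDenominators_arcs_le (Q : ℕ) :
    ∑ q ∈ badDenominators Q, ((q : ℝ) + 1) * (2 * (1 / ((Q + 1) * q))) ≤ 7 / 8 := by
  let small : Finset ℕ := Icc 1 (Q / 16)
  let multiples : Finset ℕ := {q ∈ Ioc 0 Q | 4 ∣ q}
  have subset_union : badDenominators Q ⊆ small ∪ multiples := fun q hq ↦ by
    simp only [badDenominators, small, multiples, mem_filter, mem_union, mem_Icc, mem_Ioc] at hq ⊢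
    omega
  have card_small : 16 * (#small : ℝ) ≤ Q + 1 := by
    have : 16 * #small ≤ Q + 1 := by simp only [small, Nat.card_Icc]; omega
    exact_mod_cast this
  have card_multiples : 4 * (#multiples : ℝ) ≤ Q + 1 := by
    have : 4 * #multiples ≤ Q + 1 := by
      rw [Nat.Ioc_filter_dvd_card_eq_div]
      omega
    exact_mod_cast this
  have one_le_small (q : ℕ) (hq : q ∈ small) : 1 ≤ q := (mem_Icc.1 hq).1
  have four_le_multiples (q : ℕ) (hq : q ∈ multiples) : 4 ≤ q :=
    Nat.le_of_dvd (mem_Ioc.1 (mem_filter.1 hq).1).1 (mem_filter.1 hq).2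
  calc ∑ q ∈ badDenominators Q, ((q : ℝ) + 1) * (2 * (1 / ((Q + 1) * q)))
      ≤ ∑ q ∈ small ∪ multiples, ((q : ℝ) + 1) * (2 * (1 / ((Q + 1) * q))) :=
        sum_le_sum_of_subset_of_nonneg subset_union fun _ _ _ ↦ by positivity
    _ ≤ ∑ q ∈ small, ((q : ℝ) + 1) * (2 * (1 / ((Q + 1) * q))) +
          ∑ q ∈ multiples, ((q : ℝ) + 1) * (2 * (1 / ((Q + 1) * q))) := by
        rw [← sum_union_inter]
        exact le_add_of_nonneg_right (sum_nonneg fun _ _ ↦ by positivity)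
    _ ≤ 2 * (1 + 1 / (1 : ℕ)) * #small / (Q + 1) + 2 * (1 + 1 / (4 : ℕ)) * #multiples / (Q + 1) :=
        add_le_add (sum_dirichlet_arcs_le one_pos one_le_small Q)
          (sum_dirichlet_arcs_le four_pos four_le_multiples Q)
    _ ≤ 7 / 8 := by
        rw [← add_div, div_le_iff₀ (by positivity)]
        push_cast
        linarith

lemma volume_real_badDenominators_arcs_le {Q : ℕ} (hQ : 0 < Q) :
    volume.real (Set.Icc 0 1 ∩
      rationalNeighborhood (badDenominators Q) fun q ↦ 1 / ((Q + 1) * q)) ≤ 7 / 8 := by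
  refine (volume_real_Icc_inter_rationalNeighborhood_le (fun q _ ↦ by positivity)
    fun q hq ↦ ?_).trans (sum_badDenominators_arcs_le Q)
  have q_pos : (0 : ℝ) < q := mod_cast (mem_Icc.1 (mem_filter.1 hq).1).1
  have Q_pos : (0 : ℝ) < Q := mod_cast hQ
  exact one_div_lt_one_div_of_lt q_pos (lt_mul_of_one_lt_left q_pos (by linarith))

lemma sq_le_weylEnergy_of_abs_sub_le {n : ℕ} {ω : ℝ} {r : ℚ} (hr : ¬ 4 ∣ r.den)
    (den_le : 2 * r.den ≤ n) (le_den : n ≤ 32 * r.den) (hωr : |ω - r| ≤ 64 / n ^ 2) :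
    (n / 2 ^ 15 : ℝ) ^ 2 ≤ weylEnergy n ω := by
  have n_pos : (0 : ℝ) < n := mod_cast (by have := r.den_pos; omega : 0 < n)
  have den_le' : 2 * (r.den : ℝ) ≤ n := mod_cast den_le
  have le_den' : (n : ℝ) ≤ 32 * r.den := mod_cast le_den
  have energy_r_ge : (n : ℝ) ^ 2 / 256 ≤ weylEnergy n r := by
    have : (n / 2 : ℝ) * (n / 32) ≤ (n - r.den) * r.den := by gcongr <;> linarith
    linarith [sub_den_mul_den_le_weylEnergy hr (by omega : r.den ≤ n)]
  have phase_drift_le : 4 * π * |r - ω| * n ^ 2 ≤ 1024 := by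
    calc 4 * π * |r - ω| * n ^ 2 ≤ 4 * 4 * (64 / n ^ 2) * n ^ 2 := by
          rw [abs_sub_comm]
          gcongr
          exact pi_le_four
      _ = 1024 := by
          field_simp
          norm_num
  have energy_r_le : weylEnergy n r ≤ 2 * (1 + 1024 ^ 2) * weylEnergy n ω := by
    refine (weylEnergy_le_mul_weylEnergy n r ω).trans ?_
    have := weylEnergy_nonneg n ω
    gcongr
  linarith [sq_nonneg (n : ℝ)]

lemma mem_rationalNeighborhood_or_sq_le_weylEnergy {n : ℕ} (hn : 2 ≤ n) (ω : ℝ) :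
    ω ∈ rationalNeighborhood (badDenominators (n / 2))
        (fun q ↦ 1 / (((n / 2 : ℕ) + 1) * q)) ∨
      (n / 2 ^ 15 : ℝ) ^ 2 ≤ weylEnergy n ω := by
  obtain ⟨r, hωr, den_le⟩ := exists_rat_abs_sub_le_and_den_le ω (by omega : 0 < n / 2)
  refine or_iff_not_imp_left.2 fun h_bad ↦ ?_
  have den_good : ¬ (16 * r.den ≤ n / 2 ∨ 4 ∣ r.den) := fun h ↦
    h_bad ⟨r, mem_filter.2 ⟨mem_Icc.2 ⟨r.den_pos, den_le⟩, h⟩, hωr⟩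
  push Not at den_good
  refine sq_le_weylEnergy_of_abs_sub_le den_good.2 (by omega) (by omega) (hωr.trans ?_)
  have half_le : (n / 2 : ℝ) ≤ (n / 2 : ℕ) + 1 := by
    have : (n : ℝ) ≤ 2 * ((n / 2 : ℕ) + 1) := mod_cast (by omega : n ≤ 2 * (n / 2 + 1))
    linarith
  have le_den : (n / 32 : ℝ) ≤ r.den := by
    have : (n : ℝ) ≤ 32 * r.den := mod_cast (by omega : n ≤ 32 * r.den)
    linarith
  calc 1 / (((n / 2 : ℕ) + 1) * r.den : ℝ) ≤ 1 / ((n / 2) * (n / 32)) := by gcongr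
    _ = 64 / n ^ 2 := by
        field_simp
        norm_num

lemma one_div_eight_le_volume_real_le_sqrt_weylEnergy {n : ℕ} (hn : 2 ≤ n) :
    1 / 8 ≤ volume.real ({ω | n / 2 ^ 15 ≤ √(weylEnergy n ω)} ∩ Set.Ioc 0 1) := by
  set good := {ω | n / 2 ^ 15 ≤ √(weylEnergy n ω)} ∩ Set.Ioc 0 1
  set bad := Set.Icc 0 1 ∩ rationalNeighborhood (badDenominators (n / 2))
    fun q ↦ 1 / (((n / 2 : ℕ) + 1) * q)
  have Ioc_subset : Set.Ioc 0 1 ⊆ good ∪ bad := fun ω hω ↦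
    (mem_rationalNeighborhood_or_sq_le_weylEnergy hn ω).symm.imp
      (fun h ↦ ⟨le_sqrt_of_sq_le h, hω⟩) fun h ↦ ⟨Set.Ioc_subset_Icc_self hω, h⟩
  have union_subset : good ∪ bad ⊆ Set.Icc 0 1 :=
    Set.union_subset (Set.inter_subset_right.trans Set.Ioc_subset_Icc_self) Set.inter_subset_left
  have bad_le : volume.real bad ≤ 7 / 8 :=
    volume_real_badDenominators_arcs_le (by omega : 0 < n / 2)
  have : 1 ≤ volume.real good + volume.real bad := by
    calc 1 = volume.real (Set.Ioc (0 : ℝ) 1) := by simp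
      _ ≤ volume.real (good ∪ bad) := measureReal_mono Ioc_subset
          (measure_ne_top_of_subset union_subset measure_Icc_lt_top.ne)
      _ ≤ volume.real good + volume.real bad := measureReal_union_le _ _
  linarith

lemma div_le_integral_sqrt_weylEnergy {n : ℕ} (hn : 2 ≤ n) :
    n / 2 ^ 18 ≤ ∫ ω in (0 : ℝ)..1, √(weylEnergy n ω) := by
  have integrable : IntegrableOn (fun ω ↦ √(weylEnergy n ω)) (Set.Ioc 0 1) :=
    ((continuous_weylEnergy n).sqrt.intervalIntegrable 0 1).1
  have markov := mul_meas_ge_le_integral_of_nonneg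
    (Filter.Eventually.of_forall fun ω ↦ sqrt_nonneg (weylEnergy n ω)) integrable (n / 2 ^ 15)
  rw [measureReal_restrict_apply' measurableSet_Ioc] at markov
  rw [intervalIntegral.integral_of_le zero_le_one]
  calc (n / 2 ^ 18 : ℝ) = n / 2 ^ 15 * (1 / 8) := by ring
    _ ≤ _ := by grw [one_div_eight_le_volume_real_le_sqrt_weylEnergy hn, markov]

lemma integral_fourierChar_mul_intCast (d : ℤ) :
    ∫ ω in (0 : ℝ)..1, (𝐞 (ω * d) : ℂ) = if d = 0 then 1 else 0 := by
  split_ifs with hd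
  · simp [hd]
  have fourierChar_eq (ω : ℝ) : (𝐞 (ω * d) : ℂ) = Complex.exp (d * (2 * π * Complex.I) * ω) := by
    rw [fourierChar_apply]
    push_cast
    ring_nf
  simp_rw [fourierChar_eq]
  rw [integral_exp_mul_complex (mul_ne_zero (mod_cast hd) Complex.two_pi_I_ne_zero)]
  simp [Complex.exp_int_mul_two_pi_mul_I]

lemma integral_norm_sq_sum_fourierChar {ι : Type*} {s : Finset ι} {f : ι → ℤ}
    (hf : Set.InjOn f s) :
    ∫ ω in (0 : ℝ)..1, ‖∑ j ∈ s, (𝐞 (ω * f j) : ℂ)‖ ^ 2 = #s := by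
  classical
  have norm_sq_eq (ω : ℝ) : ((‖∑ j ∈ s, (𝐞 (ω * f j) : ℂ)‖ ^ 2 : ℝ) : ℂ) =
      ∑ j ∈ s, ∑ k ∈ s, (𝐞 (ω * (f j - f k : ℤ)) : ℂ) := by
    rw [← Complex.normSq_eq_norm_sq, ← Complex.mul_conj, map_sum, sum_mul_sum]
    refine sum_congr rfl fun j _ ↦ sum_congr rfl fun k _ ↦ ?_
    rw [← Circle.coe_inv_eq_conj, ← AddChar.map_neg_eq_inv, ← Circle.coe_mul,
      ← AddChar.map_add_eq_mul]
    push_cast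
    ring_nf
  have continuous_term (j k : ι) : Continuous fun ω : ℝ ↦ (𝐞 (ω * (f j - f k : ℤ)) : ℂ) := by
    fun_prop
  rw [← Complex.ofReal_inj, ← intervalIntegral.integral_ofReal]
  simp_rw [norm_sq_eq]
  rw [intervalIntegral.integral_finsetSum fun j _ ↦
    (continuous_finsetSum _ fun k _ ↦ continuous_term j k).intervalIntegrable _ _]
  calc ∑ j ∈ s, ∫ ω in (0 : ℝ)..1, ∑ k ∈ s, (𝐞 (ω * (f j - f k : ℤ)) : ℂ)
      = ∑ j ∈ s, ∑ k ∈ s, if j = k then 1 else 0 := by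
        refine sum_congr rfl fun j hj ↦ ?_
        rw [intervalIntegral.integral_finsetSum fun k _ ↦
          (continuous_term j k).intervalIntegrable _ _]
        refine sum_congr rfl fun k hk ↦ ?_
        simp_rw [integral_fourierChar_mul_intCast, sub_eq_zero, hf.eq_iff hj hk]
    _ = _ := by simp

lemma integral_norm_sq_S (m : ℕ) : ∫ ω in (0 : ℝ)..1, ‖S ω m‖ ^ 2 = m := by
  have strictMono : StrictMono fun j : ℕ ↦ (j : ℤ) ^ 2 + j :=
    strictMono_nat_of_lt_succ fun j ↦ by
      push_cast
      nlinarith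
  have parseval := integral_norm_sq_sum_fourierChar (strictMono.injective.injOn (s := range m))
  rw [card_range] at parseval
  rw [← parseval]
  simp only [S_eq_sum_range]
  push_cast
  rfl

lemma integral_weylEnergy_le (n : ℕ) : ∫ ω in (0 : ℝ)..1, weylEnergy n ω ≤ n ^ 2 := by
  calc ∫ ω in (0 : ℝ)..1, weylEnergy n ω = ∑ m ∈ range n, ∫ ω in (0 : ℝ)..1, ‖S ω m‖ ^ 2 :=
        intervalIntegral.integral_finsetSum fun m _ ↦
          ((continuous_S m).norm.pow 2).intervalIntegrable _ _
    _ ≤ ∑ _m ∈ range n, (n : ℝ) :=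
        sum_le_sum fun m hm ↦ by
          rw [integral_norm_sq_S]
          exact_mod_cast (mem_range.1 hm).le
    _ = n ^ 2 := by
        rw [sum_const, card_range, nsmul_eq_mul, sq]

lemma integral_sqrt_weylEnergy_le (n : ℕ) : ∫ ω in (0 : ℝ)..1, √(weylEnergy n ω) ≤ n := by
  rcases n.eq_zero_or_pos with rfl | hn
  · simp [weylEnergy]
  have n_pos : (0 : ℝ) < n := mod_cast hn
  have energy_integrable := (continuous_weylEnergy n).intervalIntegrable (μ := volume) 0 1
  have sqrt_le (ω : ℝ) : √(weylEnergy n ω) ≤ n / 2 + (2 * n : ℝ)⁻¹ * weylEnergy n ω := by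
    have am_gm := two_mul_le_add_sq (n : ℝ) √(weylEnergy n ω)
    rw [sq_sqrt (weylEnergy_nonneg n ω)] at am_gm
    field_simp
    linarith
  calc ∫ ω in (0 : ℝ)..1, √(weylEnergy n ω)
      ≤ ∫ ω in (0 : ℝ)..1, (n / 2 + (2 * n : ℝ)⁻¹ * weylEnergy n ω) :=
        intervalIntegral.integral_mono_on zero_le_one
          ((continuous_weylEnergy n).sqrt.intervalIntegrable _ _)
          (intervalIntegrable_const.add (energy_integrable.const_mul _)) fun ω _ ↦ sqrt_le ω
    _ = n / 2 + (2 * n : ℝ)⁻¹ * ∫ ω in (0 : ℝ)..1, weylEnergy n ω := by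
        rw [intervalIntegral.integral_add intervalIntegrable_const (energy_integrable.const_mul _),
          intervalIntegral.integral_const_mul]
        simp
    _ ≤ n / 2 + (2 * n : ℝ)⁻¹ * n ^ 2 := by grw [integral_weylEnergy_le n]
    _ = n := by
        field_simp
        norm_num

/-- There is a constant `C₁ > 0` with
`liminf_{n→∞} (1/n) ∫₀¹ √(∑_{m=1}^{n-1} |S_m(ω)|²) dω ≥ C₁`. -/
theorem stmt_11 :
    ∃ C₁ > (0 : ℝ),
      C₁ ≤ Filter.liminf
        (fun n : ℕ =>
          (1 / (n : ℝ)) *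
            ∫ ω in (0:ℝ)..1, Real.sqrt (∑ m ∈ Finset.Icc 1 (n - 1), ‖S ω m‖ ^ 2))
        Filter.atTop := by
  simp_rw [← weylEnergy_eq_sum_Icc, one_div_mul_eq_div]
  refine ⟨1 / 2 ^ 18, by positivity, Filter.le_liminf_of_le ?_ ?_⟩
  · exact .of_frequently_le <| .of_forall fun n ↦
      div_le_one_of_le₀ (integral_sqrt_weylEnergy_le n) n.cast_nonneg
  · filter_upwards [Filter.eventually_ge_atTop 2] with n hn
    have n_pos : (0 : ℝ) < n := by positivity
    rw [le_div_iff₀ n_pos, one_div_mul_eq_div]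
    exact div_le_integral_sqrt_weylEnergy hn
end
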